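/- arXiv:1001.4462 — 2 statements merged into one kernel-verified Lean document; each statement's English description precedes it below -/
import Mathlib

section
/- There exists an optimal plain decompressor D such that no optimal prefix-free decompressor has its domain contained in the domain of D; that is, for every optimal prefix-free decompressor V, the domain of V is not a subset of the domain of D. -/
open scoped Classical

/-- Complexity of `x` with respect to decompressor `D`: length of a shortest
`D`-description of `x`, or `⊤` if none exists. -/
noncomputable def Cpx (D : List Bool →. List Bool) (x : List Bool) : ℕ∞ :=
  sInf {n : ℕ∞ | ∃ y : List Bool, x ∈ D y ∧ (y.length : ℕ∞) = n}

/-- A set of strings is prefix-free: no element is a proper prefix of another. -/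
def PrefixFreeSet (S : Set (List Bool)) : Prop :=
  ∀ p ∈ S, ∀ q ∈ S, p <+: q → p = q

/-- `U` is an optimal plain decompressor. -/
def OptimalPlain (U : List Bool →. List Bool) : Prop :=
  Partrec U ∧ ∀ D : List Bool →. List Bool, Partrec D →
    ∃ c : ℕ, ∀ x : List Bool, Cpx U x ≤ Cpx D x + (c : ℕ∞)

/-- `V` is an optimal prefix-free decompressor. -/
def OptimalPrefix (V : List Bool →. List Bool) : Prop :=
  Partrec V ∧ PrefixFreeSet V.Dom ∧
    ∀ D : List Bool →. List Bool, Partrec D → PrefixFreeSet D.Dom →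
      ∃ c : ℕ, ∀ x : List Bool, Cpx V x ≤ Cpx D x + (c : ℕ∞)


namespace PlainPrefix

open Nat.Partrec Encodable

/-- All binary strings of length `n`. -/
def strings : ℕ → List (List Bool)
  | 0 => [[]]
  | n + 1 => (strings n).flatMap fun l => [false :: l, true :: l]

theorem mem_strings {n : ℕ} {x : List Bool} : x ∈ strings n ↔ x.length = n := by
  induction n generalizing x with
  | zero => simp [strings]
  | succ n ih =>
    rcases x with _ | ⟨b, x⟩
    · simp [strings]
    · cases b <;> simp [strings, ih]

theorem length_strings (n : ℕ) : (strings n).length = 2 ^ n := by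
  induction n with
  | zero => simp [strings]
  | succ n ih => simp [strings, List.length_flatMap, ih, pow_succ]

theorem nodup_strings (n : ℕ) : (strings n).Nodup := by
  induction n with
  | zero => simp [strings]
  | succ n ih =>
    refine List.nodup_flatMap.2 ⟨fun l _ => by simp, ?_⟩
    refine ih.imp fun {a b} hab => ?_
    simp [Function.onFun, Ne.symm hab]

/-- The finite set of binary strings of length `n`. -/
def stringsFinset (n : ℕ) : Finset (List Bool) := ⟨strings n, nodup_strings n⟩

theorem mem_stringsFinset {n : ℕ} {x : List Bool} : x ∈ stringsFinset n ↔ x.length = n :=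
  mem_strings

theorem card_stringsFinset (n : ℕ) : (stringsFinset n).card = 2 ^ n :=
  length_strings n

theorem card_lt_of_length_lt {n : ℕ} {S : Finset (List Bool)} (h : ∀ x ∈ S, x.length < n) :
    S.card < 2 ^ n := by
  have hS : S ⊆ (Finset.range n).biUnion stringsFinset := fun x hx => by
    simpa [mem_stringsFinset] using h x hx
  calc S.card ≤ ∑ i ∈ Finset.range n, (stringsFinset i).card :=
        (Finset.card_le_card hS).trans Finset.card_biUnion_le
    _ = ∑ i ∈ Finset.range n, 2 ^ i := by simp [card_stringsFinset]
    _ < 2 ^ n := Nat.geomSum_lt le_rfl fun k hk => Finset.mem_range.1 hk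

/-- The strings of length `n`, those in `L` first. -/
def reorder (n : ℕ) (L : List (List Bool)) : List (List Bool) :=
  (strings n).filter (· ∈ L) ++ (strings n).filter (· ∉ L)

theorem reorder_perm (n : ℕ) (L : List (List Bool)) : (reorder n L).Perm (strings n) := by
  simpa [reorder] using List.filter_append_perm (fun x => decide (x ∈ L)) (strings n)

theorem mem_of_idxOf_reorder_lt {n m : ℕ} {L : List (List Bool)} {x : List Bool}
    (hL : m ≤ ((stringsFinset n).filter (· ∈ L)).card) (hx : (reorder n L).idxOf x < m) :
    x ∈ L := by
  by_contra hxL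
  have h1 : x ∉ (strings n).filter (· ∈ L) := by simp [hxL]
  have h2 : ((strings n).filter (· ∈ L)).length = ((stringsFinset n).filter (· ∈ L)).card := rfl
  rw [reorder, List.idxOf_append_of_notMem h1] at hx
  omega

/-- The length of the prefixes, minus one, that decide membership in block `j`. -/
def blockWidth (j : ℕ) : ℕ := j.unpair.1

/-- The list of preferred prefixes in block `j`. -/
def blockList (j : ℕ) : List (List Bool) :=
  (decode (α := List (List Bool)) j.unpair.2.unpair.1).getD []

theorem exists_block (k N : ℕ) (L : List (List Bool)) :
    ∃ j, N ≤ j ∧ blockWidth j = k ∧ blockList j = L := by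
  refine ⟨Nat.pair k (Nat.pair (encode L) N), ?_, by simp [blockWidth], by simp [blockList]⟩
  exact (Nat.right_le_pair _ _).trans (Nat.right_le_pair _ _)

/-- The partial map removing one bit of redundancy from a string. In the block of lengths
`[2 ^ j, 2 ^ (j + 1))` it is defined on the strings whose prefix of length `blockWidth j + 1` lies
in the first half of `reorder (blockWidth j + 1) (blockList j)`. -/
def shrink (y : List Bool) : Option (List Bool) :=
  ((strings (blockWidth (Nat.log 2 y.length)))[
    (reorder (blockWidth (Nat.log 2 y.length) + 1) (blockList (Nat.log 2 y.length))).idxOf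
      (y.take (blockWidth (Nat.log 2 y.length) + 1))]?).map
    (· ++ y.drop (blockWidth (Nat.log 2 y.length) + 1))

theorem shrink_isSome_iff {y : List Bool} {j : ℕ} (hj : Nat.log 2 y.length = j) :
    (shrink y).isSome ↔ (reorder (blockWidth j + 1) (blockList j)).idxOf
      (y.take (blockWidth j + 1)) < 2 ^ blockWidth j := by
  simp [shrink, hj, length_strings]

theorem blockWidth_lt (j : ℕ) : blockWidth j < 2 ^ j :=
  (Nat.unpair_left_le j).trans_lt Nat.lt_two_pow_self

theorem exists_shrink_eq (p : List Bool) : ∃ y, shrink y = some p ∧ y.length = p.length + 1 := by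
  set j := Nat.log 2 (p.length + 1) with hj
  set k := blockWidth j with hk
  have hkp : k ≤ p.length := by
    have h1 := blockWidth_lt j
    have h2 : 2 ^ j ≤ p.length + 1 := Nat.pow_log_le_self 2 (by omega)
    omega
  have hu : p.take k ∈ strings k := mem_strings.2 (by simpa using hkp)
  have hperm := reorder_perm (k + 1) (blockList j)
  have hlen : (reorder (k + 1) (blockList j)).length = 2 ^ (k + 1) := by
    rw [hperm.length_eq, length_strings]
  set i := (strings k).idxOf (p.take k) with hi
  have hi1 : i < (strings k).length := List.idxOf_lt_length_of_mem hu
  have hi2 : i < (reorder (k + 1) (blockList j)).length := by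
    rw [hlen, pow_succ]; rw [length_strings] at hi1; omega
  set x := (reorder (k + 1) (blockList j))[i] with hx
  have hxl : x.length = k + 1 := mem_strings.1 (hperm.mem_iff.1 (List.getElem_mem hi2))
  have hyl : (x ++ p.drop k).length = p.length + 1 := by simp [hxl]; omega
  refine ⟨x ++ p.drop k, ?_, hyl⟩
  rw [shrink, hyl, ← hj, ← hk, List.take_left' hxl, List.drop_left' hxl, hx,
    (hperm.nodup_iff.2 (nodup_strings _)).idxOf_getElem i hi2, List.getElem?_eq_getElem hi1]
  simp [hi]

theorem mem_blockList_of_shrink {y : List Bool} {j k : ℕ} {L : List (List Bool)}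
    (hj : Nat.log 2 y.length = j) (hk : blockWidth j = k) (hL : blockList j = L)
    (hcard : 2 ^ k ≤ ((stringsFinset (k + 1)).filter (· ∈ L)).card) (hy : (shrink y).isSome) :
    y.take (k + 1) ∈ L := by
  rw [shrink_isSome_iff hj, hk, hL] at hy
  exact mem_of_idxOf_reorder_lt hcard hy

/-- No element of `W` properly extends `y`. -/
def Alive (W : Set (List Bool)) (y : List Bool) : Prop := ∀ w ∈ W, w.take y.length = y → w = y

theorem Alive.append {W : Set (List Bool)} {y : List Bool} (h : Alive W y) (z : List Bool) :
    Alive W (y ++ z) := by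
  intro w hw hwz
  have h1 : w = y := h w hw (by
    have := congrArg (List.take y.length) hwz
    simpa [List.take_take] using this)
  have := congrArg List.length hwz
  simp [h1] at this
  simp [h1, this]

/-- The strings of length `n` not properly extended by elements of `W`. -/
noncomputable def aliveFinset (W : Set (List Bool)) (n : ℕ) : Finset (List Bool) :=
  (stringsFinset n).filter (Alive W)

/-- The last length in block `j`. -/
def blockEnd (j : ℕ) : ℕ := 2 ^ (j + 1) - 1

theorem log_blockEnd (j : ℕ) : Nat.log 2 (blockEnd j) = j := by
  have := Nat.one_le_two_pow (n := j)
  rw [Nat.log_eq_iff (by simp [blockEnd, pow_succ]; omega), blockEnd, pow_succ]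
  omega

theorem card_aliveFinset_succ_lt {W : Set (List Bool)} {J : ℕ}
    (hW : ∀ j ≥ J, ∃ w ∈ W, (shrink w).isSome ∧ Nat.log 2 w.length = j) (k : ℕ) :
    (aliveFinset W (k + 1)).card < 2 ^ k := by
  by_contra! hcard
  obtain ⟨j, hj, hk, hL⟩ := exists_block k (max J (k + 1)) (aliveFinset W (k + 1)).toList
  obtain ⟨w, hw, hws, hwj⟩ := hW j (le_of_max_le_left hj)
  have hmem := mem_blockList_of_shrink hwj hk hL (hcard.trans (Finset.card_le_card fun x hx =>
    Finset.mem_filter.2 ⟨(Finset.mem_filter.1 hx).1, Finset.mem_toList.2 hx⟩)) hws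
  rw [Finset.mem_toList, aliveFinset, Finset.mem_filter, mem_stringsFinset] at hmem
  have h1 : w = w.take (k + 1) := hmem.2 w hw (by rw [hmem.1])
  have h2 : w.length = k + 1 := by rw [h1, hmem.1]
  have h3 : 2 ^ j ≤ w.length := by
    rw [← hwj]; exact Nat.pow_log_le_self 2 (by omega)
  have h4 : j < 2 ^ j := Nat.lt_two_pow_self
  have := le_of_max_le_right hj
  omega

theorem card_aliveFinset_add_le {W : Set (List Bool)} {n d : ℕ} (T : Finset (List Bool))
    (hT : T ⊆ aliveFinset W (n + d)) (hT' : ∀ y ∈ T, y.take n ∉ aliveFinset W n) :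
    (aliveFinset W n).card * 2 ^ d + T.card ≤ (aliveFinset W (n + d)).card := by
  set E := (aliveFinset W n ×ˢ stringsFinset d).image fun p => p.1 ++ p.2 with hE
  have hEcard : E.card = (aliveFinset W n).card * 2 ^ d := by
    rw [hE, Finset.card_image_of_injOn, Finset.card_product, card_stringsFinset]
    rintro ⟨a, b⟩ h ⟨a', b'⟩ h' heq
    simp only [Finset.coe_product, Set.mem_prod, Finset.mem_coe, aliveFinset, Finset.mem_filter,
      mem_stringsFinset] at h h'
    exact Prod.ext_iff.2 (List.append_inj heq (h.1.1.trans h'.1.1.symm))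
  have hdisj : Disjoint E T := by
    rw [Finset.disjoint_left]
    intro y hy hyT
    obtain ⟨⟨a, b⟩, hab, rfl⟩ := Finset.mem_image.1 hy
    have ha := (Finset.mem_product.1 hab).1
    refine hT' _ hyT ?_
    rwa [List.take_left' (mem_stringsFinset.1 (Finset.mem_filter.1 ha).1)]
  rw [← hEcard, ← Finset.card_union_of_disjoint hdisj]
  refine Finset.card_le_card (Finset.union_subset ?_ hT)
  intro y hy
  obtain ⟨⟨a, b⟩, hab, rfl⟩ := Finset.mem_image.1 hy
  simp only [Finset.mem_product, aliveFinset, Finset.mem_filter, mem_stringsFinset] at hab ⊢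
  exact ⟨by simp [hab.1.1, hab.2], hab.1.2.append b⟩

/-- The alive strings of length `blockEnd j` in the domain of `shrink`. -/
noncomputable def aliveShrink (W : Set (List Bool)) (j : ℕ) : Finset (List Bool) :=
  (aliveFinset W (blockEnd j)).filter fun y => (shrink y).isSome

/-- The density of alive strings converges, and the strings of a block chosen outside the alive
cones of an earlier level contribute only to its increments. -/
theorem exists_card_aliveShrink_le {W : Set (List Bool)} {J : ℕ}
    (hW : ∀ j ≥ J, ∃ w ∈ W, (shrink w).isSome ∧ Nat.log 2 w.length = j) (N : ℕ) {ε : ℝ}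
    (hε : 0 < ε) : ∃ j ≥ N, ((aliveShrink W j).card : ℝ) ≤ ε * 2 ^ blockEnd j := by
  set d : ℕ → ℝ := fun k => (aliveFinset W (k + 1)).card / 2 ^ (k + 1) with hd
  have hbdd : BddAbove (Set.range d) := by
    refine ⟨1, ?_⟩
    rintro _ ⟨k, rfl⟩
    rw [hd]
    refine (div_le_one (by positivity)).2 ?_
    exact_mod_cast (card_aliveFinset_succ_lt hW k).le.trans (Nat.pow_le_pow_right two_pos k.le_succ)
  obtain ⟨k, hk⟩ := exists_lt_of_lt_ciSup (sub_lt_self (⨆ k, d k) hε)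
  have hlim : ∀ l, d l ≤ d k + ε := fun l => by
    linarith [le_ciSup hbdd l]
  have hdead : 2 ^ k ≤ (stringsFinset (k + 1) \ aliveFinset W (k + 1)).card := by
    have h1 := Finset.le_card_sdiff (aliveFinset W (k + 1)) (stringsFinset (k + 1))
    have h2 := card_aliveFinset_succ_lt hW k
    rw [card_stringsFinset, pow_succ] at h1
    omega
  obtain ⟨j, hj, hjk, hjL⟩ :=
    exists_block k (max N (k + 1)) (stringsFinset (k + 1) \ aliveFinset W (k + 1)).toList
  refine ⟨j, le_of_max_le_left hj, ?_⟩
  obtain ⟨e, he⟩ : ∃ e, blockEnd j = k + 1 + e := by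
    refine Nat.exists_eq_add_of_le ?_
    have h1 : j < 2 ^ j := Nat.lt_two_pow_self
    have h2 := le_of_max_le_right hj
    rw [blockEnd, pow_succ]
    omega
  have hadd := card_aliveFinset_add_le (W := W) (n := k + 1) (d := e) (aliveShrink W j)
    (by rw [← he]; exact Finset.filter_subset _ _) (fun y hy hya => by
      rw [aliveShrink, Finset.mem_filter, aliveFinset, Finset.mem_filter, mem_stringsFinset] at hy
      have := mem_blockList_of_shrink (by rw [hy.1.1, log_blockEnd]) hjk hjL
        (hdead.trans (Finset.card_le_card fun x hx =>
          Finset.mem_filter.2 ⟨(Finset.mem_sdiff.1 hx).1, Finset.mem_toList.2 hx⟩)) hy.2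
      rw [Finset.mem_toList, Finset.mem_sdiff] at this
      exact this.2 hya)
  have hle := hlim (k + e)
  simp only [hd] at hle
  rw [he]
  have hadd' : ((aliveFinset W (k + 1)).card * 2 ^ e + (aliveShrink W j).card : ℝ) ≤
      (aliveFinset W (k + 1 + e)).card := by exact_mod_cast hadd
  rw [add_right_comm k e 1, div_le_iff₀ (by positivity)] at hle
  have hexp : ((aliveFinset W (k + 1)).card / 2 ^ (k + 1) + ε : ℝ) * 2 ^ (k + 1 + e) =
      (aliveFinset W (k + 1)).card * 2 ^ e + ε * 2 ^ (k + 1 + e) := by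
    field_simp; ring
  linarith

theorem card_lt_add_card_aliveShrink {W F : Set (List Bool)} (hW : PrefixFreeSet W)
    (hWs : ∀ w ∈ W, (shrink w).isSome) (hF : F ⊆ W) {j : ℕ} {Z : Finset (List Bool)}
    (hZ : ∀ w ∈ Z, w ∈ W ∧ w.length ≤ blockEnd j) :
    Z.card < 2 ^ 2 ^ j + (aliveShrink F j).card := by
  have hshort : (Z.filter fun w => w.length < 2 ^ j).card < 2 ^ 2 ^ j :=
    card_lt_of_length_lt fun w hw => (Finset.mem_filter.1 hw).2
  have hlong : (Z.filter fun w => ¬ w.length < 2 ^ j).card ≤ (aliveShrink F j).card := by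
    refine Finset.card_le_card_of_injOn
      (fun w => w ++ List.replicate (blockEnd j - w.length) false) ?_ ?_
    · intro w hw
      obtain ⟨hwZ, hlen⟩ := Finset.mem_filter.1 hw
      obtain ⟨hwW, hle⟩ := hZ w hwZ
      have hl : (w ++ List.replicate (blockEnd j - w.length) false).length = blockEnd j := by
        simp; omega
      have hlog : Nat.log 2 w.length = j := by
        have := Nat.one_le_two_pow (n := j)
        rw [blockEnd] at hle
        rw [Nat.log_eq_iff (by right; omega)]
        omega
      simp only [Finset.mem_coe, aliveShrink, aliveFinset, Finset.mem_filter, mem_stringsFinset]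
      refine ⟨⟨hl, ?_⟩, ?_⟩
      · intro v hv hvw
        have hpre : w <+: v := (List.prefix_append _ _).trans (hvw ▸ List.take_prefix _ _)
        have hwv := hW w hwW v (hF hv) hpre
        rw [← hvw, List.take_of_length_le]
        rw [hl, ← hwv]
        exact hle
      · have := hWs w hwW
        rw [shrink_isSome_iff hlog] at this
        rwa [shrink_isSome_iff (by rw [hl, log_blockEnd]), List.take_append_of_le_length]
        have := blockWidth_lt j
        omega
    · intro w hw w' hw' heq
      have hp : w <+: w' ++ List.replicate (blockEnd j - w'.length) false :=
        ⟨_, heq⟩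
      have hw := (hZ w (Finset.mem_filter.1 hw).1).1
      have hw' := (hZ w' (Finset.mem_filter.1 hw').1).1
      rcases le_total w.length w'.length with h | h
      · exact hW w hw w' hw' (List.prefix_of_prefix_length_le hp (List.prefix_append _ _) h)
      · exact (hW w' hw' w hw (List.prefix_of_prefix_length_le (List.prefix_append _ _) hp h)).symm
  have := Finset.card_filter_add_card_filter_not (s := Z) (fun w => w.length < 2 ^ j)
  omega

theorem Cpx_le_length {D : List Bool →. List Bool} {x y : List Bool} (h : x ∈ D y) :
    Cpx D x ≤ y.length :=
  sInf_le ⟨y, h, rfl⟩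

theorem exists_mem_of_Cpx_le {D : List Bool →. List Bool} {x : List Bool} {n : ℕ}
    (h : Cpx D x ≤ n) : ∃ y, x ∈ D y ∧ y.length ≤ n := by
  have hne : {n : ℕ∞ | ∃ y : List Bool, x ∈ D y ∧ (y.length : ℕ∞) = n}.Nonempty := by
    by_contra hne
    rw [Cpx, Set.not_nonempty_iff_eq_empty.1 hne, sInf_empty, top_le_iff] at h
    exact ENat.natCast_ne_top n h
  obtain ⟨y, hy, hyn⟩ := csInf_mem hne
  exact ⟨y, hy, by exact_mod_cast hyn.trans_le h⟩

theorem Cpx_le_add {U D : List Bool →. List Bool} {c : ℕ}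
    (h : ∀ y, ∀ x ∈ D y, ∃ y', x ∈ U y' ∧ y'.length ≤ y.length + c) (x : List Bool) :
    Cpx U x ≤ Cpx D x + c := by
  rcases eq_or_ne (Cpx D x) ⊤ with htop | htop
  · simp [htop]
  · obtain ⟨n, hn⟩ := ENat.ne_top_iff_exists.1 htop
    obtain ⟨y, hy, hyn⟩ := exists_mem_of_Cpx_le hn.ge
    obtain ⟨y', hy', hle⟩ := h y x hy
    rw [← hn]
    exact (Cpx_le_length hy').trans (by exact_mod_cast hle.trans (by omega))

theorem idxOf_false_replicate (e : ℕ) (p : List Bool) :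
    (List.replicate e true ++ false :: p).idxOf false = e := by
  rw [List.idxOf_append_of_notMem (by simp)]
  simp

theorem drop_replicate (e : ℕ) (p : List Bool) :
    (List.replicate e true ++ false :: p).drop (e + 1) = p := by
  simp [List.drop_append]

/-- The prefix-free machine mapping `replicate e true ++ false :: p` to `p` for the
strings `p` of length `h e`. -/
def selfDelimiting (h : ℕ →. ℕ) (y : List Bool) : Part (List Bool) :=
  (h (y.idxOf false)).bind fun n =>
    ((if y.length = y.idxOf false + 1 + n then some (y.drop (y.idxOf false + 1)) else none :
      Option (List Bool)) : Part (List Bool))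

theorem partrec_selfDelimiting {h : ℕ →. ℕ} (hh : Partrec h) : Partrec (selfDelimiting h) := by
  have hidx : Primrec fun y : List Bool => y.idxOf false :=
    Primrec.list_idxOf.comp (Primrec.const false) Primrec.id
  refine (hh.comp hidx.to_comp).bind (Computable.ofOption (Primrec.to_comp ?_))
  have hidx' := hidx.comp (Primrec.fst (α := List Bool) (β := ℕ))
  exact Primrec.ite
    (Primrec.eq.comp (Primrec.list_length.comp Primrec.fst)
      (Primrec.nat_add.comp (Primrec.nat_add.comp hidx' (Primrec.const 1)) Primrec.snd))
    (Primrec.option_some.comp (Primrec.list_drop.comp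
      (Primrec.nat_add.comp hidx' (Primrec.const 1)) Primrec.fst))
    (Primrec.const none)

theorem prefixFreeSet_dom_selfDelimiting (h : ℕ →. ℕ) :
    PrefixFreeSet (PFun.Dom (selfDelimiting h)) := by
  have hdom : ∀ y ∈ PFun.Dom (selfDelimiting h), ∃ n ∈ h (y.idxOf false),
      y.length = y.idxOf false + 1 + n := fun y hy => by
    obtain ⟨x, hx⟩ := (PFun.mem_dom _ _).1 hy
    obtain ⟨n, hn, hx⟩ := Part.mem_bind_iff.1 hx
    refine ⟨n, hn, ?_⟩
    by_contra hne
    simp [hne] at hx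
  intro p hp q hq hpq
  obtain ⟨n, hn, hnl⟩ := hdom p hp
  obtain ⟨m, hm, hml⟩ := hdom q hq
  obtain ⟨r, rfl⟩ := hpq
  have hidx : (p ++ r).idxOf false = p.idxOf false :=
    List.idxOf_append_of_mem (List.idxOf_lt_length_iff.1 (by omega))
  rw [hidx] at hm hml
  refine List.prefix_append p r |>.eq_of_length ?_
  rw [hnl, hml, Part.mem_unique hn hm]

theorem exists_card_eq_of_optimalPrefix {V : List Bool →. List Bool} (hV : OptimalPrefix V)
    {h : ℕ →. ℕ} (hh : Partrec h) : ∃ c : ℕ, ∀ e, ∀ n ∈ h e, ∃ Z : Finset (List Bool),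
      Z.card = 2 ^ n ∧ ∀ w ∈ Z, w ∈ V.Dom ∧ w.length ≤ e + 1 + n + c := by
  obtain ⟨c, hc⟩ := hV.2.2 _ (partrec_selfDelimiting hh) (prefixFreeSet_dom_selfDelimiting h)
  refine ⟨c, fun e n hn => ?_⟩
  have hdesc : ∀ x ∈ stringsFinset n, ∃ w, x ∈ V w ∧ w.length ≤ e + 1 + n + c := fun x hx => by
    rw [mem_stringsFinset] at hx
    have hlen : (List.replicate e true ++ false :: x).length = e + 1 + n := by
      simp [hx]; omega
    have hmem : x ∈ selfDelimiting h (List.replicate e true ++ false :: x) := by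
      refine Part.mem_bind_iff.2 ⟨n, by rwa [idxOf_false_replicate], ?_⟩
      rw [idxOf_false_replicate, drop_replicate, if_pos hlen]
      simp
    refine exists_mem_of_Cpx_le ((hc x).trans ?_)
    have := Cpx_le_length hmem
    rw [hlen] at this
    exact_mod_cast add_le_add_left this (c : ℕ∞)
  choose! f hf using hdesc
  refine ⟨(stringsFinset n).image f, ?_, fun w hw => ?_⟩
  · rw [Finset.card_image_of_injOn, card_stringsFinset]
    intro x hx x' hx' heq
    exact Part.mem_unique (hf x hx).1 (heq ▸ (hf x' hx').1)
  · obtain ⟨x, hx, rfl⟩ := Finset.mem_image.1 hw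
    exact ⟨(PFun.mem_dom _ _).2 ⟨x, (hf x hx).1⟩, (hf x hx).2⟩

/-- The plain machine running the program with number `e` on `p` when given
`replicate e true ++ false :: p`. -/
def universal (y : List Bool) : Part (List Bool) :=
  (Code.eval (Denumerable.ofNat Code (y.idxOf false)) (encode (y.drop (y.idxOf false + 1)))).bind
    fun n => ((decode n : Option (List Bool)) : Part (List Bool))

theorem partrec_universal : Partrec universal := by
  have hidx : Primrec fun y : List Bool => y.idxOf false :=
    Primrec.list_idxOf.comp (Primrec.const false) Primrec.id
  refine (Code.eval_part.comp ((Primrec.ofNat Code).comp hidx).to_comp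
    (Primrec.encode.comp (Primrec.list_drop.comp
      (Primrec.nat_add.comp hidx (Primrec.const 1)) Primrec.id)).to_comp).bind ?_
  exact (Computable.ofOption (Computable.decode.comp Computable.snd)).to₂

theorem exists_code_of_partrec {D : List Bool →. List Bool} (hD : Partrec D) :
    ∃ c : Code, ∀ y, c.eval (encode y) = (D y).map encode := by
  obtain ⟨c, hc⟩ := Code.exists_code.1 hD
  exact ⟨c, fun y => by simp [hc]⟩

theorem exists_universal_eq {D : List Bool →. List Bool} (hD : Partrec D) :
    ∃ e : ℕ, ∀ y, universal (List.replicate e true ++ false :: y) = D y := by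
  obtain ⟨c, hc⟩ := exists_code_of_partrec hD
  refine ⟨encode c, fun y => ?_⟩
  rw [universal, idxOf_false_replicate, drop_replicate, Denumerable.ofNat_encode, hc]
  ext x
  simp

theorem primrec_pow {α : Type*} [Primcodable α] {f : α → ℕ} (hf : Primrec f) :
    Primrec fun a => 2 ^ f a :=
  (Primrec₂.unpaired'.1 Nat.Primrec.pow).comp (Primrec.const 2) hf

theorem primrec_log : Primrec (Nat.log 2) := by
  refine (Primrec.nat_findGreatest (f := id) (p := fun n j => 2 ^ j ≤ n) Primrec.id
    (Primrec.nat_le.comp (primrec_pow Primrec.snd) Primrec.fst)).of_eq fun n => ?_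
  rw [Nat.findGreatest_eq_iff]
  refine ⟨Nat.log_le_self 2 n, fun h => Nat.pow_log_le_self 2 fun h0 => ?_, fun m hm _ h => ?_⟩
  · simp [h0] at h
  · exact absurd (Nat.le_log_of_pow_le one_lt_two h) (by omega)

theorem primrec_strings : Primrec strings := by
  have hstep : Primrec₂ fun (_ : ℕ) (l : List (List Bool)) =>
      l.flatMap fun l => [false :: l, true :: l] := by
    refine Primrec.list_flatMap Primrec.snd ?_
    have hc : ∀ b : Bool, Primrec fun a : (ℕ × List (List Bool)) × List Bool => b :: a.2 :=
      fun b => Primrec.list_cons.comp (Primrec.const b) Primrec.snd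
    exact Primrec.list_cons.comp (hc false)
      (Primrec.list_cons.comp (hc true) (Primrec.const []))
  refine (Primrec.nat_rec₁ [[]] hstep).of_eq fun n => ?_
  induction n with
  | zero => rfl
  | succ n ih => rw [strings, ← ih]

theorem primrec_reorder : Primrec₂ reorder := by
  have hmem : PrimrecRel fun (x : List Bool) (L : List (List Bool)) => x ∈ L :=
    ((PrimrecRel.exists_mem_list (R := fun a b : List Bool => a = b) Primrec.eq).comp
      Primrec.snd Primrec.fst).of_eq fun p => by simp
  have hs : Primrec fun p : ℕ × List (List Bool) => strings p.1 := primrec_strings.comp Primrec.fst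
  have hnot : PrimrecRel fun (x : List Bool) (L : List (List Bool)) => x ∉ L := hmem.not
  exact Primrec.list_append.comp (hmem.listFilter.comp hs Primrec.snd)
    (hnot.listFilter.comp hs Primrec.snd)

theorem primrec_shrink : Primrec shrink := by
  have hlog : Primrec fun y : List Bool => Nat.log 2 y.length :=
    primrec_log.comp Primrec.list_length
  have hwidth : Primrec fun y : List Bool => blockWidth (Nat.log 2 y.length) :=
    Primrec.fst.comp (Primrec.unpair.comp hlog)
  have hlist : Primrec fun y : List Bool => blockList (Nat.log 2 y.length) :=
    Primrec.option_getD.comp (Primrec.decode.comp (Primrec.fst.comp (Primrec.unpair.comp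
      (Primrec.snd.comp (Primrec.unpair.comp hlog))))) (Primrec.const [])
  have hsucc := Primrec.succ.comp hwidth
  have hidx : Primrec₂ fun (x : List Bool) (l : List (List Bool)) => l.idxOf x := by
    convert Primrec.list_idxOf (α := List Bool) using 5
  refine Primrec.option_map (Primrec.list_getElem?.comp (primrec_strings.comp hwidth)
    (hidx.comp (Primrec.list_take.comp hsucc Primrec.id)
      (primrec_reorder.comp hsucc hlist))) ?_
  exact Primrec.list_append.comp Primrec.snd
    ((Primrec.list_drop.comp hsucc Primrec.id).comp Primrec.fst)

/-- The candidate `(j, s, F)` shows, by means of the strings in `F` on which `c` halts within `s`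
steps, that block `j` has few alive strings. -/
def IsSparse (c : Code) (e : ℕ) (t : ℕ × ℕ × List (List Bool)) : Prop :=
  2 * e + 3 ≤ 2 ^ t.1 ∧ (∀ w ∈ t.2.2, (Code.evaln t.2.1 c (encode w)).isSome) ∧
    2 * (aliveShrink {w | w ∈ t.2.2} t.1).card ≤ 2 ^ (2 ^ (t.1 + 1) - (2 * e + 2))

theorem primrec_card_aliveShrink :
    Primrec₂ fun (F : List (List Bool)) (j : ℕ) => (aliveShrink {w | w ∈ F} j).card := by
  have hext : PrimrecRel fun (w y : List Bool) => w.take y.length = y → w = y :=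
    ((Primrec.eq.comp (Primrec.list_take.comp (Primrec.list_length.comp Primrec.snd) Primrec.fst)
      Primrec.snd).not.or (Primrec.eq.comp Primrec.fst Primrec.snd)).of_eq
        fun p => by tauto
  have hshrink : PrimrecPred fun y : List Bool => (shrink y).isSome :=
    Primrec.eq.comp (Primrec.option_isSome.comp primrec_shrink) (Primrec.const true)
  have hrel : PrimrecRel fun (y : List Bool) (F : List (List Bool)) =>
      (shrink y).isSome ∧ Alive {w | w ∈ F} y :=
    (hshrink.comp Primrec.fst).and (hext.forall_mem_list.comp Primrec.snd Primrec.fst)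
  have hend : Primrec blockEnd :=
    Primrec.nat_sub.comp (primrec_pow Primrec.succ) (Primrec.const 1)
  refine (Primrec.list_length.comp (hrel.listFilter.comp
    (primrec_strings.comp (hend.comp Primrec.snd)) Primrec.fst)).of_eq fun p => ?_
  simp only [aliveShrink, aliveFinset, Finset.filter_filter, and_comm]
  rfl

theorem primrecRel_isSparse (c : Code) : PrimrecRel (IsSparse c) := by
  have hevaln : PrimrecRel fun (w : List Bool) (s : ℕ) => (Code.evaln s c (encode w)).isSome :=
    Primrec.eq.comp (Primrec.option_isSome.comp (Code.primrec_evaln.comp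
      ((Primrec.snd.pair (Primrec.const c)).pair (Primrec.encode.comp Primrec.fst))))
      (Primrec.const true)
  have hj : Primrec fun p : ℕ × ℕ × ℕ × List (List Bool) => p.2.1 :=
    Primrec.fst.comp Primrec.snd
  have hs : Primrec fun p : ℕ × ℕ × ℕ × List (List Bool) => p.2.2.1 :=
    Primrec.fst.comp (Primrec.snd.comp Primrec.snd)
  have hF : Primrec fun p : ℕ × ℕ × ℕ × List (List Bool) => p.2.2.2 :=
    Primrec.snd.comp (Primrec.snd.comp Primrec.snd)
  have hlin : ∀ i : ℕ, Primrec fun p : ℕ × ℕ × ℕ × List (List Bool) => 2 * p.1 + i := fun i =>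
    Primrec.nat_add.comp (Primrec.nat_mul.comp (Primrec.const 2) Primrec.fst) (Primrec.const i)
  exact (Primrec.nat_le.comp (hlin 3) (primrec_pow hj)).and
    ((hevaln.forall_mem_list.comp hF hs).and
      (Primrec.nat_le.comp
        (Primrec.nat_mul.comp (Primrec.const 2) (primrec_card_aliveShrink.comp hF hj))
        (primrec_pow (Primrec.nat_sub.comp (primrec_pow (Primrec.succ.comp hj)) (hlin 2)))))

theorem exists_partrec_isSparse (c : Code) (hc : ∀ e, ∃ t, IsSparse c e t) :
    ∃ h : ℕ →. ℕ, Partrec h ∧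
      ∀ e, ∃ n ∈ h e, ∃ t, IsSparse c e t ∧ n = 2 ^ (t.1 + 1) - (2 * e + 2) := by
  set f : ℕ → ℕ → Option ℕ := fun e m =>
    (decode (α := ℕ × ℕ × List (List Bool)) m).bind fun t =>
      if IsSparse c e t then some (2 ^ (t.1 + 1) - (2 * e + 2)) else none with hf
  have hprim : Primrec₂ f := by
    refine Primrec.option_bind (Primrec.decode.comp Primrec.snd) ?_
    have he : Primrec fun p : (ℕ × ℕ) × ℕ × ℕ × List (List Bool) => p.1.1 :=
      Primrec.fst.comp Primrec.fst
    have hj : Primrec fun p : (ℕ × ℕ) × ℕ × ℕ × List (List Bool) => p.2.1 :=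
      Primrec.fst.comp Primrec.snd
    exact Primrec.ite ((primrecRel_isSparse c).comp he Primrec.snd)
      (Primrec.option_some.comp (Primrec.nat_sub.comp (primrec_pow (Primrec.succ.comp hj))
        (Primrec.nat_add.comp (Primrec.nat_mul.comp (Primrec.const 2) he) (Primrec.const 2))))
      (Primrec.const none)
  refine ⟨fun e => Nat.rfindOpt (f e), Partrec.rfindOpt hprim.to_comp, fun e => ?_⟩
  obtain ⟨t, ht⟩ := hc e
  have hdom : (Nat.rfindOpt (f e)).Dom := Nat.rfindOpt_dom.2 ⟨encode t, _, by
    rw [hf]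
    simp only [encodek, Option.bind_some, if_pos ht]
    rfl⟩
  refine ⟨_, Part.get_mem hdom, ?_⟩
  obtain ⟨m, hm⟩ := Nat.rfindOpt_spec (Part.get_mem hdom)
  obtain ⟨t, -, ht⟩ := Option.bind_eq_some_iff.1 hm
  split_ifs at ht with hsp
  exact ⟨t, hsp, (Option.some.inj ht).symm⟩

theorem exists_mem_block {V : List Bool →. List Bool} (hV : OptimalPrefix V) :
    ∃ J, ∀ j ≥ J, ∃ w ∈ V.Dom, Nat.log 2 w.length = j := by
  obtain ⟨c, hc⟩ := exists_card_eq_of_optimalPrefix hV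
    (h := fun e => Part.some (2 ^ e)) (primrec_pow Primrec.id).to_comp
  refine ⟨c + 3, fun j hj => ?_⟩
  obtain ⟨Z, hZ, hZV⟩ := hc j _ (Part.mem_some _)
  obtain ⟨w, hw, hle⟩ : ∃ w ∈ Z, 2 ^ j ≤ w.length := by
    by_contra! hlt
    exact absurd hZ (card_lt_of_length_lt hlt).ne
  refine ⟨w, (hZV w hw).1, ?_⟩
  have hup := (hZV w hw).2
  have hpow : 2 * j < 2 ^ j + 1 + 1 := by
    have h1 : ∀ i : ℕ, 2 * i + 6 < 2 ^ (i + 3) := fun i => by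
      induction i with
      | zero => norm_num
      | succ i ih => rw [show i + 1 + 3 = i + 3 + 1 by ring, pow_succ]; omega
    have h2 := h1 (j - 3)
    rw [Nat.sub_add_cancel (by omega)] at h2
    omega
  rw [Nat.log_eq_iff (by right; have := Nat.one_le_two_pow (n := j); omega), pow_succ]
  omega

theorem exists_isSparse {W : Set (List Bool)} {J : ℕ}
    (hW : ∀ j ≥ J, ∃ w ∈ W, (shrink w).isSome ∧ Nat.log 2 w.length = j) {c : Code}
    (hc : ∀ w ∈ W, ∃ s, (Code.evaln s c (encode w)).isSome) (e : ℕ) : ∃ t, IsSparse c e t := by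
  obtain ⟨j, hj, hle⟩ := exists_card_aliveShrink_le hW (2 * e + 3)
    (show (0 : ℝ) < (2 ^ (2 * e + 2))⁻¹ by positivity)
  have hj2 : 2 * e + 3 ≤ 2 ^ j := hj.trans Nat.lt_two_pow_self.le
  have hwit : ∀ y, ∃ w, ¬ Alive W y → w ∈ W ∧ w.take y.length = y ∧ w ≠ y := fun y => by
    by_cases hy : Alive W y
    · exact ⟨y, fun h => absurd hy h⟩
    · obtain ⟨w, hw⟩ := by simpa [Alive] using hy
      exact ⟨w, fun _ => hw⟩
  choose g hg using hwit
  set F := ((strings (blockEnd j)).filter fun y => ¬ Alive W y).map g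
  have hFW : ∀ w ∈ F, w ∈ W := fun w hw => by
    obtain ⟨y, hy, rfl⟩ := List.mem_map.1 hw
    exact (hg y (by simpa using (List.mem_filter.1 hy).2)).1
  choose! s hs using hc
  refine ⟨(j, (F.map s).sum, F), hj2, fun w hw => ?_, ?_⟩
  · obtain ⟨x, hx⟩ := Option.isSome_iff_exists.1 (hs w (hFW w hw))
    exact Option.isSome_iff_exists.2 ⟨x, Code.evaln_mono
      (List.le_sum_of_mem (List.mem_map_of_mem hw)) hx⟩
  · have hsub : aliveShrink {w | w ∈ F} j ⊆ aliveShrink W j := fun y hy => by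
      simp only [aliveShrink, aliveFinset, Finset.mem_filter] at hy ⊢
      refine ⟨⟨hy.1.1, ?_⟩, hy.2⟩
      by_contra hdead
      have h := hg y hdead
      exact h.2.2 (hy.1.2 _ (List.mem_map_of_mem (List.mem_filter.2
        ⟨mem_strings.2 (mem_stringsFinset.1 hy.1.1), by simpa using hdead⟩)) h.2.1)
    have hexp : blockEnd j = (2 ^ (j + 1) - (2 * e + 2) - 1) + (2 * e + 2) := by
      rw [blockEnd, pow_succ]; omega
    have hcard : (aliveShrink W j).card ≤ 2 ^ (2 ^ (j + 1) - (2 * e + 2) - 1) := by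
      rw [hexp, pow_add (2 : ℝ) _ (2 * e + 2), mul_comm, mul_assoc,
          mul_inv_cancel₀ (by positivity), mul_one] at hle
      exact_mod_cast hle
    calc 2 * (aliveShrink {w | w ∈ F} j).card ≤ 2 * 2 ^ (2 ^ (j + 1) - (2 * e + 2) - 1) :=
          Nat.mul_le_mul_left 2 ((Finset.card_le_card hsub).trans hcard)
      _ = 2 ^ (2 ^ (j + 1) - (2 * e + 2)) := by
          rw [← pow_succ']
          congr 1
          rw [pow_succ]; omega

theorem not_forall_shrink_isSome {V : List Bool →. List Bool} (hV : OptimalPrefix V) :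
    ¬ ∀ w ∈ V.Dom, (shrink w).isSome := by
  intro hS
  obtain ⟨J, hJ⟩ := exists_mem_block hV
  have hW : ∀ j ≥ J, ∃ w ∈ V.Dom, (shrink w).isSome ∧ Nat.log 2 w.length = j := fun j hj => by
    obtain ⟨w, hw, hwj⟩ := hJ j hj
    exact ⟨w, hw, hS w hw, hwj⟩
  obtain ⟨c, hc⟩ := exists_code_of_partrec hV.1
  have hdom : ∀ w, w ∈ V.Dom ↔ ∃ s, (Code.evaln s c (encode w)).isSome := fun w => by
    simp only [Option.isSome_iff_exists]
    rw [exists_comm, PFun.mem_dom]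
    have hiff : ∀ x, (∃ s, Code.evaln s c (encode w) = some x) ↔ x ∈ (V w).map encode := fun x => by
      rw [← hc, Code.evaln_complete]; rfl
    simp only [hiff, Part.mem_map_iff]
    exact ⟨fun ⟨y, hy⟩ => ⟨_, y, hy, rfl⟩, fun ⟨_, y, hy, _⟩ => ⟨y, hy⟩⟩
  obtain ⟨h, hh, hspec⟩ :=
    exists_partrec_isSparse c (exists_isSparse hW fun w hw => (hdom w).1 hw)
  obtain ⟨e, he⟩ := exists_card_eq_of_optimalPrefix hV hh
  obtain ⟨n, hn, ⟨j, s, F⟩, ⟨hlarge, hF, hsmall⟩, hnj⟩ := hspec e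
  obtain ⟨Z, hZ, hZV⟩ := he e n hn
  dsimp only at hlarge hF hsmall hnj
  rw [← hnj] at hsmall
  rw [pow_succ] at hnj
  have hlt := card_lt_add_card_aliveShrink hV.2.1 hS (F := {w | w ∈ F})
    (fun w hw => (hdom w).2 ⟨s, hF w hw⟩) (j := j) (Z := Z) fun w hw =>
      ⟨(hZV w hw).1, (hZV w hw).2.trans (by rw [blockEnd, pow_succ]; omega)⟩
  have hpow : 2 * 2 ^ 2 ^ j ≤ 2 ^ n := by
    rw [← pow_succ']
    exact Nat.pow_le_pow_right two_pos (by omega)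
  omega

theorem optimalPlain_shrink_universal :
    OptimalPlain fun y => ((shrink y : Option (List Bool)) : Part (List Bool)).bind universal := by
  refine ⟨primrec_shrink.to_comp.ofOption.bind (partrec_universal.comp Computable.snd).to₂,
    fun D hD => ?_⟩
  obtain ⟨e, he⟩ := exists_universal_eq hD
  refine ⟨e + 2, Cpx_le_add fun y x hx => ?_⟩
  obtain ⟨z, hz, hlen⟩ := exists_shrink_eq (List.replicate e true ++ false :: y)
  refine ⟨z, ?_, by simp [hlen]; omega⟩
  simpa [hz, he] using hx

end PlainPrefix

/-- there is an optimal plain decompressor `D` such that no optimal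
prefix-free decompressor has its domain contained in the domain of `D`. -/
theorem stmt0 :
    ∃ D : List Bool →. List Bool, OptimalPlain D ∧
      ∀ V : List Bool →. List Bool, OptimalPrefix V → ¬ V.Dom ⊆ D.Dom := by
  refine ⟨_, PlainPrefix.optimalPlain_shrink_universal, fun V hV hsub =>
    PlainPrefix.not_forall_shrink_isSome hV fun w hw => ?_⟩
  obtain ⟨x, hx⟩ := (PFun.mem_dom _ _).1 (hsub hw)
  obtain ⟨p, hp, -⟩ := Part.mem_bind_iff.1 hx
  exact Option.isSome_iff_exists.2 ⟨p, by simpa using hp⟩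
end

section
/- There exists a computably decidable set A of binary strings such that (1) for every n, the number of strings of length n in A is at least 2^n/3 (i.e., 3·|A ∩ {0,1}^n| ≥ 2^n), and (2) for every optimal prefix-free decompressor V, the domain of V is not a subset of A. -/
open scoped Classical

open Encodable

/-- The list of all binary strings of length `n`. -/
def cubeList : ℕ → List (List Bool)
  | 0 => [[]]
  | n + 1 => (cubeList n).map (List.cons false) ++ (cubeList n).map (List.cons true)

lemma mem_cubeList {n : ℕ} {x : List Bool} : x ∈ cubeList n ↔ x.length = n := by
  induction n generalizing x with
  | zero => simp [cubeList]
  | succ n ih =>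
    cases x with
    | nil => simp [cubeList]
    | cons b x => cases b <;> simp [cubeList, ih]

lemma nodup_cubeList (n : ℕ) : (cubeList n).Nodup := by
  induction n with
  | zero => simp [cubeList]
  | succ n ih =>
    refine List.Nodup.append (ih.map (List.cons_injective)) (ih.map (List.cons_injective)) ?_
    intro x hx hy
    simp only [List.mem_map] at hx hy
    obtain ⟨a, -, rfl⟩ := hx
    obtain ⟨b, -, h⟩ := hy
    simp at h

lemma length_cubeList (n : ℕ) : (cubeList n).length = 2 ^ n := by
  induction n with
  | zero => simp [cubeList]
  | succ n ih => simp [cubeList, ih, pow_succ, mul_two]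

lemma primrec_cubeList : Primrec cubeList := by
  refine (Primrec.nat_rec₁ (f := fun _ l => l.map (List.cons false) ++ l.map (List.cons true))
    [[]] ?_).of_eq fun n => ?_
  · exact (Primrec.list_append.comp
      (Primrec.list_map Primrec.snd (Primrec.list_cons.comp (Primrec.const false) Primrec.snd).to₂)
      (Primrec.list_map Primrec.snd
        (Primrec.list_cons.comp (Primrec.const true) Primrec.snd).to₂)).to₂
  · induction n with
    | zero => rfl
    | succ n ih => simp only [cubeList, ← ih]

/-- The finite set of all binary strings of length `n`. -/
def cube (n : ℕ) : Finset (List Bool) := (cubeList n).toFinset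

lemma mem_cube {n : ℕ} {x : List Bool} : x ∈ cube n ↔ x.length = n := by
  simp [cube, mem_cubeList]

lemma card_cube (n : ℕ) : (cube n).card = 2 ^ n := by
  rw [cube, List.toFinset_card_of_nodup (nodup_cubeList n), length_cubeList]

lemma card_lt_of_length_lt {P : Finset (List Bool)} {a : ℕ} (h : ∀ p ∈ P, p.length < a) :
    P.card < 2 ^ a := by
  have hsub : P ⊆ (Finset.range a).biUnion cube := fun p hp =>
    Finset.mem_biUnion.2 ⟨p.length, Finset.mem_range.2 (h p hp), mem_cube.2 rfl⟩
  calc P.card ≤ ∑ i ∈ Finset.range a, (cube i).card :=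
        (Finset.card_le_card hsub).trans Finset.card_biUnion_le
    _ = ∑ i ∈ Finset.range a, 2 ^ i := by simp only [card_cube]
    _ < 2 ^ a := Nat.geomSum_lt le_rfl (by simp)

lemma card_filter_take_mem (E : Finset (List Bool)) (k n : ℕ) :
    ((cube n).filter (fun x => x.take k ∈ E)).card ≤ E.card * 2 ^ (n - k) := by
  rw [← card_cube (n - k), ← Finset.card_product]
  refine Finset.card_le_card_of_injOn (fun x => (x.take k, x.drop k)) ?_ ?_
  · intro x hx
    simp only [Finset.coe_filter, Set.mem_ofPred_eq, mem_cube] at hx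
    simp [mem_cube, hx.1, hx.2]
  · intro x _ y _ h
    simp only [Prod.mk.injEq] at h
    rw [← List.take_append_drop k x, h.1, h.2, List.take_append_drop]

lemma OptimalPrefix.exists_card_eq {V : List Bool →. List Bool} (hV : OptimalPrefix V)
    {ℓ : ℕ →. ℕ} (hℓ : Partrec ℓ) :
    ∃ c : ℕ, ∀ i, ∀ l ∈ ℓ i, ∃ P : Finset (List Bool), (↑P ⊆ V.Dom) ∧ P.card = 2 ^ l ∧
      ∀ p ∈ P, p.length ≤ l + i + 1 + c := by
  let D : List Bool →. List Bool := fun z => (ℓ (z.findIdx id)).bind fun l =>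
    ((if z.length = l + z.findIdx id + 1 then some z else none : Option (List Bool)) :
      Part (List Bool))
  have hidx : Primrec fun z : List Bool => z.findIdx id :=
    Primrec.list_findIdx Primrec.id Primrec.snd.to₂
  have hD : Partrec D := by
    refine (hℓ.comp hidx.to_comp).bind (Computable.ofOption (f := fun a : List Bool × ℕ =>
      if a.1.length = a.2 + a.1.findIdx id + 1 then some a.1 else none) (Primrec.to_comp ?_)).to₂
    refine Primrec.ite ?_ (Primrec.option_some.comp Primrec.fst) (Primrec.const none)
    exact Primrec.eq.comp (Primrec.list_length.comp Primrec.fst)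
      (Primrec.succ.comp (Primrec.nat_add.comp Primrec.snd (hidx.comp Primrec.fst)))
  have hmem : ∀ z x, x ∈ D z ↔
      x = z ∧ ∃ l ∈ ℓ (z.findIdx id), z.length = l + z.findIdx id + 1 := by
    intro z x
    simp only [D, Part.mem_bind_iff, Part.mem_ofOption]
    constructor
    · rintro ⟨l, hl, h⟩
      split_ifs at h with h'
      · exact ⟨by simpa using h.symm, l, hl, h'⟩
      · simp at h
    · rintro ⟨rfl, l, hl, h⟩
      exact ⟨l, hl, by simp [h]⟩
  have hpf : PrefixFreeSet D.Dom := by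
    intro p hp q hq hpq
    obtain ⟨x, hx⟩ := (PFun.mem_dom _ _).1 hp
    obtain ⟨y, hy⟩ := (PFun.mem_dom _ _).1 hq
    obtain ⟨-, l, hl, hlen⟩ := (hmem _ _).1 hx
    obtain ⟨-, l', hl', hlen'⟩ := (hmem _ _).1 hy
    have hpq' := hpq
    obtain ⟨w, rfl⟩ := hpq'
    have hi : (p ++ w).findIdx id = p.findIdx id := by
      rw [List.findIdx_append, if_pos (by omega)]
    rw [hi] at hl' hlen'
    have := Part.mem_unique hl hl'
    exact hpq.eq_of_length (by omega)
  obtain ⟨c, hc⟩ := hV.2.2 D hD hpf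
  refine ⟨c, fun i l hl => ?_⟩
  let z : List Bool → List Bool := fun y => List.replicate i false ++ true :: y
  have hz : ∀ y ∈ cube l, ∃ p, z y ∈ V p ∧ p.length ≤ l + i + 1 + c := by
    intro y hy
    rw [mem_cube] at hy
    have hzi : (z y).findIdx id = i := by
      clear hl
      simp only [z]
      induction i with
      | zero => simp [List.findIdx_cons]
      | succ i ih => simp [List.replicate_succ, List.findIdx_cons, ih]
    have hzl : (z y).length = l + i + 1 := by simp [z, hy]; omega
    have hzD : z y ∈ D (z y) := (hmem _ _).2 ⟨rfl, l, by rwa [hzi], by rw [hzi, hzl]⟩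
    have hle : Cpx V (z y) ≤ ((l + i + 1 + c : ℕ) : ℕ∞) := by
      refine (hc (z y)).trans ?_
      push_cast
      gcongr
      exact sInf_le ⟨z y, hzD, by rw [hzl]; push_cast; rfl⟩
    have hne : {n : ℕ∞ | ∃ p : List Bool, z y ∈ V p ∧ (p.length : ℕ∞) = n}.Nonempty := by
      by_contra hempty
      rw [Set.not_nonempty_iff_eq_empty] at hempty
      rw [Cpx, hempty, sInf_empty, top_le_iff] at hle
      exact ENat.natCast_ne_top _ hle
    obtain ⟨p, hp, hpl⟩ := csInf_mem hne
    refine ⟨p, hp, ?_⟩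
    rw [Cpx, ← hpl] at hle
    exact_mod_cast hle
  choose! f hf using hz
  refine ⟨(cube l).image f, ?_, ?_, ?_⟩
  · intro p hp
    simp only [Finset.coe_image, Set.mem_image, Finset.mem_coe] at hp
    obtain ⟨y, hy, rfl⟩ := hp
    exact (PFun.mem_dom _ _).2 ⟨_, (hf y hy).1⟩
  · rw [Finset.card_image_of_injOn, card_cube]
    intro y hy y' hy' h
    have h1 := (hf y hy).1
    rw [h] at h1
    simpa [z] using Part.mem_unique h1 (hf y' hy').1
  · intro p hp
    obtain ⟨y, hy, rfl⟩ := Finset.mem_image.1 hp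
    exact (hf y hy).2

lemma Partrec.exists_primrec_enum_dom {V : List Bool →. List Bool} (hV : Partrec V) :
    ∃ e : ℕ → Option (List Bool), Primrec e ∧ ∀ p, p ∈ V.Dom ↔ ∃ i, e i = some p := by
  obtain ⟨c, hc⟩ := Nat.Partrec.Code.exists_code.1 hV
  refine ⟨fun i => (Nat.Partrec.Code.evaln i.unpair.1 c i.unpair.2).bind
    fun _ => decode i.unpair.2, ?_, fun p => ⟨fun hp => ?_, ?_⟩⟩
  · have h1 : Primrec fun i : ℕ => i.unpair.1 := Primrec.fst.comp Primrec.unpair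
    have h2 : Primrec fun i : ℕ => i.unpair.2 := Primrec.snd.comp Primrec.unpair
    exact Primrec.option_bind
      (Nat.Partrec.Code.primrec_evaln.comp ((h1.pair (Primrec.const c)).pair h2))
      (Primrec.decode.comp (h2.comp Primrec.fst)).to₂
  · obtain ⟨x, hx⟩ := (PFun.mem_dom _ _).1 hp
    have : encode x ∈ c.eval (encode p) := by
      rw [hc]
      simp only [encodek, Part.coe_some, Part.bind_some]
      exact Part.mem_map _ hx
    obtain ⟨k, hk⟩ := Nat.Partrec.Code.evaln_complete.1 this
    refine ⟨Nat.pair k (encode p), ?_⟩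
    simp [Option.mem_def.1 hk]
  · rintro ⟨i, hi⟩
    obtain ⟨x, hx, hp⟩ := Option.bind_eq_some_iff.1 hi
    have := Nat.Partrec.Code.evaln_sound hx
    rw [hc] at this
    simp only [hp, Part.coe_some, Part.bind_some, Part.mem_map_iff] at this
    obtain ⟨y, hy, -⟩ := this
    exact (PFun.mem_dom _ _).2 ⟨y, hy⟩

/-- The list of strings coded by the second component of `n`. -/
def codedList (n : ℕ) : List (List Bool) := (decode n.unpair.2).getD []

lemma primrec_codedList : Primrec codedList :=
  Primrec.option_getD.comp (Primrec.decode.comp (Primrec.snd.comp Primrec.unpair))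
    (Primrec.const [])

lemma codedList_pair (k : ℕ) (E : List (List Bool)) :
    codedList (Nat.pair k (encode E)) = E := by
  simp [codedList]

/-- The number `n` codes a pair `(k, E)`; a string of length between `n ^ 2` and `n ^ 2 + 2 * n`
belongs to `cylinderSet` when its prefix of length `k` is not in `E`, or when `E` is too large. -/
def cylinderSet : Set (List Bool) :=
  {x | 3 * (codedList x.length.sqrt).length ≤ 2 * 2 ^ x.length.sqrt.unpair.1 →
    x.take x.length.sqrt.unpair.1 ∉ codedList x.length.sqrt}

lemma primrecPred_cylinderSet : PrimrecPred (· ∈ cylinderSet) := by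
  have hs : Primrec fun x : List Bool => x.length.sqrt := Primrec.nat_sqrt.comp Primrec.list_length
  have hk : Primrec fun x : List Bool => x.length.sqrt.unpair.1 :=
    Primrec.fst.comp (Primrec.unpair.comp hs)
  have hE := primrec_codedList.comp hs
  have hpow : Primrec₂ ((· ^ ·) : ℕ → ℕ → ℕ) := Primrec₂.unpaired'.1 Nat.Primrec.pow
  have h1 := Primrec.nat_le.comp
    (Primrec.nat_mul.comp (Primrec.const 3) (Primrec.list_length.comp hE))
    (Primrec.nat_mul.comp (Primrec.const 2) (hpow.comp (Primrec.const 2) hk))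
  have h2 : PrimrecPred fun x : List Bool =>
      ∃ a ∈ codedList x.length.sqrt, a = x.take x.length.sqrt.unpair.1 :=
    (PrimrecRel.exists_mem_list (R := fun a b : List Bool => a = b) Primrec.eq).comp hE
      (Primrec.list_take.comp hk Primrec.id)
  refine (h1.not.or h2.not).of_eq fun x => ?_
  simp only [cylinderSet, Set.mem_ofPred_eq, exists_eq_right]
  tauto

lemma card_cube_le_cylinderSet (n : ℕ) :
    2 ^ n ≤ 3 * ((cube n).filter (· ∈ cylinderSet)).card := by
  set k := n.sqrt.unpair.1
  set E := codedList n.sqrt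
  have hkn : k ≤ n := (Nat.unpair_left_le _).trans (Nat.sqrt_le_self n)
  have hpow : 2 ^ k * 2 ^ (n - k) = 2 ^ n := by rw [← pow_add, Nat.add_sub_cancel' hkn]
  by_cases h : 3 * E.length ≤ 2 * 2 ^ k
  · have hsub : (cube n).filter (¬ · ∈ cylinderSet) ⊆
        (cube n).filter (fun x => x.take k ∈ E.toFinset) := by
      intro x hx
      rw [Finset.mem_filter, mem_cube] at hx ⊢
      obtain ⟨rfl, hx⟩ := hx
      simp only [cylinderSet, Set.mem_ofPred_eq, not_forall, not_not] at hx
      exact ⟨rfl, List.mem_toFinset.2 hx.2⟩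
    have h1 := (Finset.card_le_card hsub).trans (card_filter_take_mem E.toFinset k n)
    have h2 := Finset.card_filter_add_card_filter_not (s := cube n) (· ∈ cylinderSet)
    rw [card_cube] at h2
    have h3 : 3 * (E.toFinset.card * 2 ^ (n - k)) ≤ 2 * 2 ^ n := by
      calc 3 * (E.toFinset.card * 2 ^ (n - k)) = 3 * E.toFinset.card * 2 ^ (n - k) := by ring
        _ ≤ 2 * 2 ^ k * 2 ^ (n - k) := by
          exact Nat.mul_le_mul_right _ ((Nat.mul_le_mul_left 3 E.toFinset_card_le).trans h)
        _ = 2 * 2 ^ n := by rw [mul_assoc, hpow]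
    omega
  · rw [Finset.filter_true_of_mem, card_cube]
    · omega
    · intro x hx
      rw [mem_cube] at hx
      subst hx
      exact fun h' => absurd h' h

lemma append_mem_cylinderSet {x w : List Bool} (hx : x ∈ cylinderSet)
    (h : (x ++ w).length.sqrt = x.length.sqrt) : x ++ w ∈ cylinderSet := by
  simp only [cylinderSet, Set.mem_ofPred_eq, h] at hx ⊢
  rwa [List.take_append_of_le_length]
  exact (Nat.unpair_left_le _).trans (Nat.sqrt_le_self _)

lemma sqrt_eq_of_mem_Icc {n m : ℕ} (h1 : n ^ 2 ≤ m) (h2 : m ≤ n ^ 2 + 2 * n) : m.sqrt = n := by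
  rw [← Nat.eq_sqrt.2 ⟨by nlinarith, by nlinarith⟩]

/-- The strings of length `n` without proper extensions in `S`. -/
noncomputable def unextended (S : Set (List Bool)) (n : ℕ) : Finset (List Bool) :=
  (cube n).filter fun u => ∀ p ∈ S, ¬ (u <+: p ∧ u ≠ p)

lemma mem_unextended {S : Set (List Bool)} {n : ℕ} {u : List Bool} :
    u ∈ unextended S n ↔ u.length = n ∧ ∀ p ∈ S, ¬ (u <+: p ∧ u ≠ p) := by
  rw [unextended, Finset.mem_filter, mem_cube]

lemma mem_unextended_of_prefix {S : Set (List Bool)} {n : ℕ} {u v : List Bool}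
    (hu : u ∈ unextended S n) (h : u <+: v) : v ∈ unextended S v.length := by
  rw [mem_unextended] at hu ⊢
  refine ⟨rfl, fun p hp ⟨hvp, hne⟩ => hu.2 p hp ⟨h.trans hvp, ?_⟩⟩
  rintro rfl
  exact hne (hvp.eq_of_length_le h.length_le)

lemma PrefixFreeSet.card_le_card_unextended {S A : Set (List Bool)} (hS : PrefixFreeSet S)
    {P : Finset (List Bool)} {N : ℕ} (hPS : ↑P ⊆ S) (hN : ∀ p ∈ P, p.length ≤ N)
    (hA : ∀ p ∈ P, p ++ List.replicate (N - p.length) false ∈ A) :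
    P.card ≤ ((unextended S N).filter (· ∈ A)).card := by
  refine Finset.card_le_card_of_injOn (fun p => p ++ List.replicate (N - p.length) false) ?_ ?_
  · intro p hp
    rw [Finset.mem_coe, Finset.mem_filter, mem_unextended]
    refine ⟨⟨?_, fun q hq ⟨hpre, hne⟩ => ?_⟩, hA p hp⟩
    · have := hN p hp
      simp only [List.length_append, List.length_replicate]
      omega
    · have hpq : p <+: q := (List.prefix_append _ _).trans hpre
      have := hS p (hPS hp) q hq hpq
      subst this
      exact hne (hpre.eq_of_length_le (by simp))
  · intro p hp q hq h
    have h1 : p <+: q ++ List.replicate (N - q.length) false := ⟨_, h⟩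
    rcases List.prefix_or_prefix_of_prefix h1 (List.prefix_append _ _) with h | h
    · exact hS p (hPS hp) q (hPS hq) h
    · exact (hS q (hPS hq) p (hPS hp) h).symm

lemma exists_partrec_sparse_level {S : Set (List Bool)} {e : ℕ → Option (List Bool)}
    (he : Primrec e) (hS : ∀ p, p ∈ S ↔ ∃ i, e i = some p) {A : Set (List Bool)}
    (hA : PrimrecPred (· ∈ A)) {N : ℕ → ℕ} (hN : Primrec N) {b : ℕ → ℕ → ℕ} (hb : Primrec₂ b) :
    ∃ g : ℕ →. ℕ, Partrec g ∧
      (∀ c, ∀ n ∈ g c, c < n ∧ ((unextended S (N n)).filter (· ∈ A)).card < b c n) ∧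
      ∀ c n, c < n → ((unextended S (N n)).filter (· ∈ A)).card < b c n → (g c).Dom := by
  let T : ℕ → List (List Bool) := fun s => (List.range s).filterMap e
  have hT : Primrec T := Primrec.listFilterMap Primrec.list_range (he.comp Primrec.snd).to₂
  let R : List Bool → List Bool → Prop := fun p u =>
    u = p.take u.length ∧ u ≠ p
  have hRiff : ∀ p u, R p u ↔ u <+: p ∧ u ≠ p := fun p u => by
    simp only [R, List.prefix_iff_eq_take]
  have hR : PrimrecRel R :=
    (Primrec.eq.comp Primrec.snd (Primrec.list_take.comp
      (Primrec.list_length.comp Primrec.snd) Primrec.fst)).and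
    (Primrec.eq.comp Primrec.snd Primrec.fst).not
  let Q : List Bool → ℕ → Prop := fun u s => u ∈ A ∧ ¬ ∃ p ∈ T s, R p u
  have hQ : PrimrecRel Q := (hA.comp Primrec.fst).and
    (hR.exists_mem_list.comp (hT.comp Primrec.snd) Primrec.fst).not
  let free : ℕ → ℕ → List (List Bool) := fun n s => (cubeList (N n)).filter fun u => Q u s
  have hfree : Primrec₂ free :=
    (hQ.listFilter.comp (primrec_cubeList.comp (hN.comp Primrec.fst)) Primrec.snd).to₂
  have hlen : ∀ n s, (free n s).length = ((cube (N n)).filter fun u => Q u s).card := by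
    intro n s
    rw [← List.toFinset_card_of_nodup ((nodup_cubeList _).filter _)]
    congr 1
    ext u
    simp [cube]
  have hTS : ∀ s, ∀ p ∈ T s, p ∈ S := by
    intro s p hp
    obtain ⟨i, -, hi⟩ := List.mem_filterMap.1 hp
    exact (hS p).2 ⟨i, hi⟩
  have hle : ∀ n s, ((unextended S (N n)).filter (· ∈ A)).card ≤ (free n s).length := by
    intro n s
    rw [hlen]
    refine Finset.card_le_card fun u hu => ?_
    rw [Finset.mem_filter, mem_unextended] at hu
    rw [Finset.mem_filter, mem_cube]
    refine ⟨hu.1.1, hu.2, ?_⟩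
    rintro ⟨p, hp, hpu⟩
    exact hu.1.2 p (hTS s p hp) ((hRiff p u).1 hpu)
  have hex : ∀ n, ∃ s, (free n s).length ≤ ((unextended S (N n)).filter (· ∈ A)).card := by
    intro n
    have : ∀ u, ∃ i, (∃ p ∈ S, u <+: p ∧ u ≠ p) → ∃ p, e i = some p ∧ R p u := by
      intro u
      by_cases h : ∃ p ∈ S, u <+: p ∧ u ≠ p
      · obtain ⟨p, hp, hpu⟩ := h
        obtain ⟨i, hi⟩ := (hS p).1 hp
        exact ⟨i, fun _ => ⟨p, hi, (hRiff p u).2 hpu⟩⟩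
      · exact ⟨0, fun h' => absurd h' h⟩
    choose i hi using this
    refine ⟨(cube (N n)).sup i + 1, ?_⟩
    rw [hlen]
    refine Finset.card_le_card fun u hu => ?_
    rw [Finset.mem_filter] at hu
    rw [Finset.mem_filter, mem_unextended]
    refine ⟨⟨mem_cube.1 hu.1, fun p hp hpu => hu.2.2 ?_⟩, hu.2.1⟩
    obtain ⟨q, hq, hqu⟩ := hi u ⟨p, hp, hpu⟩
    refine ⟨q, List.mem_filterMap.2 ⟨i u, List.mem_range.2 ?_, hq⟩, hqu⟩
    exact Nat.lt_succ_of_le (Finset.le_sup hu.1)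
  let f : ℕ → ℕ → Option ℕ := fun c t =>
    if c < t.unpair.1 ∧ (free t.unpair.1 t.unpair.2).length < b c t.unpair.1
    then some t.unpair.1 else none
  have hf : Primrec₂ f := by
    have h1 : Primrec fun a : ℕ × ℕ => a.2.unpair.1 :=
      Primrec.fst.comp (Primrec.unpair.comp Primrec.snd)
    have h2 : Primrec fun a : ℕ × ℕ => a.2.unpair.2 :=
      Primrec.snd.comp (Primrec.unpair.comp Primrec.snd)
    exact (Primrec.ite ((Primrec.nat_lt.comp Primrec.fst h1).and
      (Primrec.nat_lt.comp (Primrec.list_length.comp (hfree.comp h1 h2))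
        (hb.comp Primrec.fst h1))) (Primrec.option_some.comp h1) (Primrec.const none)).to₂
  refine ⟨fun c => Nat.rfindOpt (f c), Partrec.rfindOpt hf.to_comp, ?_, ?_⟩
  · intro c n hn
    obtain ⟨t, ht⟩ := Nat.rfindOpt_spec hn
    simp only [f, Option.mem_def, Option.ite_none_right_eq_some, Option.some.injEq] at ht
    obtain ⟨⟨h1, h2⟩, rfl⟩ := ht
    exact ⟨h1, (hle _ _).trans_lt h2⟩
  · intro c n hcn hlt
    obtain ⟨s, hs⟩ := hex n
    refine Nat.rfindOpt_dom.2 ⟨Nat.pair n s, n, ?_⟩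
    simp only [f, Nat.unpair_pair, Option.mem_def]
    rw [if_pos ⟨hcn, hs.trans_lt hlt⟩]

lemma OptimalPrefix.exists_mem_dom_length {V : List Bool →. List Bool} (hV : OptimalPrefix V) :
    ∃ c : ℕ, ∀ n > c, ∃ p ∈ V.Dom, n ^ 2 ≤ p.length ∧ p.length ≤ n ^ 2 + 2 * n := by
  obtain ⟨c, hc⟩ := hV.exists_card_eq (ℓ := fun i => Part.some (i * i))
    (Primrec.nat_mul.comp Primrec.id Primrec.id).to_comp
  refine ⟨c, fun n hn => ?_⟩
  obtain ⟨P, hP, hcard, hlen⟩ := hc n _ (Part.mem_some _)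
  rw [← sq] at hcard hlen
  by_contra! hcon
  refine (card_lt_of_length_lt (P := P) (a := n ^ 2) fun p hp => ?_).ne hcard
  by_contra! hp'
  have := hcon p (hP hp) hp'
  have := hlen p hp
  omega

lemma OptimalPrefix.exists_card_unextended {V : List Bool →. List Bool} (hV : OptimalPrefix V)
    (hsub : V.Dom ⊆ cylinderSet) :
    ∃ c : ℕ, ∀ n > c, 2 ^ (n ^ 2 + 2 * n - 2 * c - 2) ≤
      ((unextended V.Dom (n ^ 2 + 2 * n)).filter (· ∈ cylinderSet)).card := by
  obtain ⟨e, he, heS⟩ := hV.1.exists_primrec_enum_dom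
  have hN : Primrec fun n : ℕ => n ^ 2 + 2 * n :=
    (Primrec.nat_add.comp (Primrec.nat_mul.comp Primrec.id Primrec.id)
      (Primrec.nat_mul.comp (Primrec.const 2) Primrec.id)).of_eq fun n => by simp [sq]
  have hpow : Primrec₂ ((· ^ ·) : ℕ → ℕ → ℕ) := Primrec₂.unpaired'.1 Nat.Primrec.pow
  have hm : Primrec₂ fun c n : ℕ => n ^ 2 + 2 * n - 2 * c :=
    (Primrec.nat_sub.comp (hN.comp Primrec.snd)
      (Primrec.nat_mul.comp (Primrec.const 2) Primrec.fst)).to₂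
  have hb : Primrec₂ fun c n : ℕ => 2 ^ (n ^ 2 + 2 * n - 2 * c - 2) :=
    (hpow.comp (Primrec.const 2) (Primrec.nat_sub.comp hm (Primrec.const 2))).to₂
  obtain ⟨g, hg, hg1, hg2⟩ := exists_partrec_sparse_level he heS primrecPred_cylinderSet hN hb
  have hℓ : Partrec fun c => (g c).map fun n => n ^ 2 + 2 * n - 2 * c - 1 :=
    hg.map (Primrec.nat_sub.comp hm (Primrec.const 1)).to_comp.to₂
  obtain ⟨c, hc⟩ := hV.exists_card_eq hℓ
  refine ⟨c, fun n hn => ?_⟩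
  by_contra! hcon
  obtain ⟨n, hgn⟩ := Part.dom_iff_mem.1 (hg2 c n hn hcon)
  obtain ⟨hcn, hlt⟩ := hg1 c n hgn
  obtain ⟨P, hP, hcard, hlen⟩ := hc c _ (Part.mem_map _ hgn)
  have hlen' : ∀ p ∈ P, p.length ≤ n ^ 2 + 2 * n := fun p hp => by
    have := hlen p hp
    omega
  have hshort : (P.filter fun p => p.length < n ^ 2).card < 2 ^ (n ^ 2) :=
    card_lt_of_length_lt fun p hp => (Finset.mem_filter.1 hp).2
  have hlong : (P.filter fun p => ¬ p.length < n ^ 2).card ≤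
      ((unextended V.Dom (n ^ 2 + 2 * n)).filter (· ∈ cylinderSet)).card := by
    refine hV.2.1.card_le_card_unextended (fun p hp => hP (Finset.mem_filter.1 hp).1)
      (fun p hp => hlen' p (Finset.mem_filter.1 hp).1) fun p hp => ?_
    obtain ⟨hp, hpn⟩ := Finset.mem_filter.1 hp
    have hpN := hlen' p hp
    refine append_mem_cylinderSet (hsub (hP hp)) ?_
    rw [sqrt_eq_of_mem_Icc (n := n) (by omega) hpN]
    apply sqrt_eq_of_mem_Icc <;> simp only [List.length_append, List.length_replicate] <;> omega
  have hsum := Finset.card_filter_add_card_filter_not (s := P) fun p => p.length < n ^ 2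
  have hmono : 2 ^ (n ^ 2) ≤ 2 ^ (n ^ 2 + 2 * n - 2 * c - 2) :=
    Nat.pow_le_pow_right (by norm_num) (by omega)
  have hsucc : 2 ^ (n ^ 2 + 2 * n - 2 * c - 1) = 2 * 2 ^ (n ^ 2 + 2 * n - 2 * c - 2) := by
    rw [← pow_succ']
    congr 1
    omega
  omega

lemma OptimalPrefix.not_dom_subset_cylinderSet {V : List Bool →. List Bool}
    (hV : OptimalPrefix V) : ¬ V.Dom ⊆ cylinderSet := by
  intro hsub
  obtain ⟨c₁, h₁⟩ := hV.exists_mem_dom_length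
  obtain ⟨c₂, h₂⟩ := hV.exists_card_unextended hsub
  set U := unextended V.Dom
  have hUcube : ∀ M, U M ⊆ cube M := fun M => Finset.filter_subset _ _
  have hsmall : ∀ M, 2 ≤ M → c₁ < M → 3 * (U M).card < 2 ^ M := by
    intro M hM hcM
    by_contra! hcon
    set E := (cube M \ U M).toList
    set n := Nat.pair M (encode E) with hn
    have hMn : M ≤ n := Nat.left_le_pair _ _
    obtain ⟨p, hp, hp1, hp2⟩ := h₁ n (by omega)
    have hs := sqrt_eq_of_mem_Icc hp1 hp2
    have hpM : M < p.length := by nlinarith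
    have hpA := hsub hp
    simp only [cylinderSet, Set.mem_ofPred_eq, hs, hn, codedList_pair, Nat.unpair_pair] at hpA
    have hcard : E.length + (U M).card = 2 ^ M := by
      rw [Finset.length_toList, Finset.card_sdiff_add_card_eq_card (hUcube M), card_cube]
    have hpU := hpA (by omega)
    rw [Finset.mem_toList, Finset.mem_sdiff, not_and_not_right] at hpU
    have hlen : (p.take M).length = M := by simp [hpM.le]
    refine (mem_unextended.1 (hpU (mem_cube.2 hlen))).2 p hp ⟨List.take_prefix _ _, fun h => ?_⟩
    rw [h] at hlen
    omega
  have hgrow : ∀ M, 2 ≤ M → c₁ < M → c₂ < M → ∃ N, M ≤ N ∧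
      (U M).card * 2 ^ (N - M) + 2 ^ (N - 2 * c₂ - 2) ≤ (U N).card ∧ 2 * c₂ + 2 ≤ N := by
    intro M hM hc₁ hc₂
    set n := Nat.pair M (encode (U M).toList) with hn
    have hMn : M ≤ n := Nat.left_le_pair _ _
    refine ⟨n ^ 2 + 2 * n, by nlinarith, ?_, by nlinarith⟩
    set N := n ^ 2 + 2 * n
    have hMN : M ≤ N := hMn.trans (by simp only [N]; omega)
    rw [← Finset.card_filter_add_card_filter_not (s := U N) (· ∈ cylinderSet), add_comm]
    refine add_le_add (h₂ n (by omega)) ?_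
    rw [← card_cube (N - M), ← Finset.card_product]
    refine Finset.card_le_card_of_injOn (fun a => a.1 ++ a.2) ?_ ?_
    · rintro ⟨u, w⟩ h
      simp only [Finset.coe_product, Set.mem_prod, Finset.mem_coe, mem_cube] at h
      have hu := (mem_unextended.1 h.1).1
      have hlen : (u ++ w).length = N := by simp [hu, h.2, hMN]
      simp only [Finset.mem_coe, Finset.mem_filter]
      refine ⟨hlen ▸ mem_unextended_of_prefix h.1 (List.prefix_append _ _), ?_⟩
      simp only [cylinderSet, Set.mem_ofPred_eq, hlen,
        sqrt_eq_of_mem_Icc (n := n) (m := N) (by omega) le_rfl]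
      simp only [hn, codedList_pair, Nat.unpair_pair, Finset.length_toList, Finset.mem_toList,
        not_forall, not_not]
      refine ⟨by have := hsmall M hM hc₁; omega, ?_⟩
      rw [← hu, List.take_left, hu]
      exact h.1
    · rintro ⟨u, w⟩ h ⟨u', w'⟩ h' heq
      simp only [Finset.coe_product, Set.mem_prod, Finset.mem_coe, mem_cube] at h h'
      have hu := (mem_unextended.1 h.1).1
      have hu' := (mem_unextended.1 h'.1).1
      obtain ⟨rfl, rfl⟩ := List.append_inj heq (hu.trans hu'.symm)
      rfl
  have hunbounded : ∀ j : ℕ, ∃ M, 2 ≤ M ∧ c₁ < M ∧ c₂ < M ∧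
      j * 2 ^ M ≤ (U M).card * 2 ^ (2 * c₂ + 2) := by
    intro j
    induction j with
    | zero => exact ⟨c₁ + c₂ + 2, by omega, by omega, by omega, by simp⟩
    | succ j ih =>
      obtain ⟨M, h2, hc₁, hc₂, hj⟩ := ih
      obtain ⟨N, hMN, hcard, hN⟩ := hgrow M h2 hc₁ hc₂
      refine ⟨N, by omega, by omega, by omega, ?_⟩
      have e1 : 2 ^ N = 2 ^ M * 2 ^ (N - M) := by rw [← pow_add, Nat.add_sub_cancel' hMN]
      have e2 : 2 ^ N = 2 ^ (N - 2 * c₂ - 2) * 2 ^ (2 * c₂ + 2) := by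
        rw [← pow_add]
        congr 1
        omega
      calc (j + 1) * 2 ^ N = j * 2 ^ M * 2 ^ (N - M) + 2 ^ N := by rw [e1]; ring
        _ ≤ (U M).card * 2 ^ (2 * c₂ + 2) * 2 ^ (N - M) +
            2 ^ (N - 2 * c₂ - 2) * 2 ^ (2 * c₂ + 2) := by
          rw [← e2]
          gcongr
        _ = ((U M).card * 2 ^ (N - M) + 2 ^ (N - 2 * c₂ - 2)) * 2 ^ (2 * c₂ + 2) := by ring
        _ ≤ (U N).card * 2 ^ (2 * c₂ + 2) := by gcongr
  obtain ⟨M, h2, hc₁, -, hM⟩ := hunbounded (2 ^ (2 * c₂ + 2))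
  have := hsmall M h2 hc₁
  rw [mul_comm] at hM
  have := Nat.le_of_mul_le_mul_right hM (by positivity)
  omega

theorem stmt1 :
    ∃ A : Set (List Bool), ComputablePred (· ∈ A) ∧
      (∀ n : ℕ, 2 ^ n ≤ 3 * ({x | x ∈ A ∧ x.length = n} : Set (List Bool)).ncard) ∧
      ∀ V : List Bool →. List Bool, OptimalPrefix V → ¬ V.Dom ⊆ A := by
  refine ⟨cylinderSet, ?_, fun n => ?_, fun V hV => hV.not_dom_subset_cylinderSet⟩
  · obtain ⟨inst, h⟩ := primrecPred_cylinderSet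
    exact ⟨inst, h.to_comp⟩
  · have : {x | x ∈ cylinderSet ∧ x.length = n} =
        (((cube n).filter (· ∈ cylinderSet) : Finset (List Bool)) : Set (List Bool)) := by
      ext x
      simp [mem_cube, and_comm]
    rw [this, Set.ncard_coe_finset]
    exact card_cube_le_cylinderSet n
end
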